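/- Let A be a finite collection of nonempty finite subsets of a linearly ordered finite set V, and let T(A) be its Tchebyshev triangulation. Then the Tchebyshev transform of the F-polynomial of A equals the F-polynomial of T(A): T(F_A)(x) = F_{T(A)}(x) in ℚ[x], where F_A(x) = 1 + Σ_{j≥1} s_j(A)·((x−1)/2)^j and F_{T(A)}(x) = 1 + Σ_{k≥1} f_{k−1}(T(A))·((x−1)/2)^k. -/

import Mathlib

open Finset

/-- The set of vertices of the original complex underlying a vertex `(u, v)` of the
Tchebyshev triangulation: `{u, v} ∖ {1̂}`, where `1̂ = ⊤`. -/
def pairVertexSet {α : Type*} [DecidableEq α] (p : α × WithTop α) : Finset α :=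
  WithTop.recTopCoe {p.1} (fun a => {p.1, a}) p.2

/-- The `(k-1)`-dimensional faces of the Tchebyshev triangulation `T(A)` of a collection `A`
of nonempty finite subsets of a linearly ordered set `V`: sets
`{(u_1,v_1),…,(u_k,v_k)}` with `u_i ∈ V`, `v_i ∈ V ∪ {1̂}`, `u_i < v_i`, `v_1 < ⋯ < v_k`,
such that `{u_1,v_1,…,u_k,v_k} ∖ {1̂} ∈ A`, and for each `i ≤ k-1` either `u_i = u_{i+1}`
or `v_i ≤ u_{i+1}`. -/
def tchebFaces {α : Type*} [LinearOrder α] [DecidableEq α]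
    (A : Finset (Finset α)) (k : ℕ) : Set (Finset (α × WithTop α)) :=
  {σ | ∃ e : Fin k → α × WithTop α,
      σ = Finset.image e Finset.univ ∧
      StrictMono (fun i => (e i).2) ∧
      (∀ i, ((e i).1 : WithTop α) < (e i).2) ∧
      (Finset.univ.biUnion fun i => pairVertexSet (e i)) ∈ A ∧
      (∀ i j : Fin k, (i : ℕ) + 1 = (j : ℕ) →
        (e i).1 = (e j).1 ∨ (e i).2 ≤ ((e j).1 : WithTop α))}

/-- `s_j(A)`: the number of members of `A` of cardinality `j`. -/
def sCount {α : Type*} [DecidableEq α] (A : Finset (Finset α)) (j : ℕ) : ℕ :=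
  (A.filter fun F => F.card = j).card

open Polynomial

/-- The Tchebyshev transform: the `ℚ`-linear map `ℚ[x] → ℚ[x]` sending `x^n` to the `n`-th
Chebyshev polynomial of the first kind `T_n(x)`, evaluated on a polynomial `p`. -/
noncomputable def chebTransform (p : Polynomial ℚ) : Polynomial ℚ :=
  ∑ n ∈ Finset.range (p.natDegree + 1),
    Polynomial.C (p.coeff n) * Polynomial.Chebyshev.T ℚ (n : ℤ)

section
variable {β : Type*} [LinearOrder β]

def tfaces : List β → List (List (β × β))
  | [] => [[]]
  | [_] => []
  | a :: b :: G => (tfaces (a :: G) ++ (tfaces (b :: G) ++ tfaces G)).map (fun l => (a, b) :: l)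
termination_by G => G.length

def TValid (l : List (β × β)) : Prop :=
  (∀ p ∈ l, p.1 < p.2) ∧
    l.Pairwise (fun p q => p.2 < q.2 ∧ (p.1 = q.1 ∨ p.2 ≤ q.1))

def TSupp (l : List (β × β)) (G : List β) : Prop :=
  ∀ x, x ∈ G ↔ ∃ p ∈ l, x = p.1 ∨ x = p.2

theorem tvalid_cons {u v : β} {l : List (β × β)} (h : TValid ((u, v) :: l)) :
    u < v ∧ TValid l ∧ ∀ q ∈ l, v < q.2 ∧ (u = q.1 ∨ v ≤ q.1) := by
  obtain ⟨h1, h2⟩ := h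
  rw [List.pairwise_cons] at h2
  exact ⟨h1 (u, v) (by simp), ⟨fun p hp => h1 p (by simp [hp]), h2.2⟩, fun q hq => h2.1 q hq⟩

theorem tvalid_cons_mk {u v : β} {l : List (β × β)} (h0 : u < v) (h : TValid l)
    (h1 : ∀ q ∈ l, v < q.2 ∧ (u = q.1 ∨ v ≤ q.1)) : TValid ((u, v) :: l) := by
  obtain ⟨h2, h3⟩ := h
  refine ⟨?_, List.pairwise_cons.2 ⟨h1, h3⟩⟩
  intro p hp
  rcases List.mem_cons.1 hp with rfl | hp
  · exact h0
  · exact h2 p hp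

theorem tsupp_cons {u v : β} {l : List (β × β)} {G : List β} :
    TSupp ((u, v) :: l) G ↔ ∀ x, x ∈ G ↔ (x = u ∨ x = v ∨ ∃ p ∈ l, x = p.1 ∨ x = p.2) := by
  unfold TSupp
  simp [or_assoc]

theorem mem_tfaces (n : ℕ) : ∀ (G : List β), G.length = n → G.Pairwise (· < ·) →
    ∀ l, l ∈ tfaces G ↔ TValid l ∧ TSupp l G := by
  induction n using Nat.strong_induction_on with
  | _ n ih =>
  intro G hn hG l
  match G, hn, hG with
  | [], _, _ =>
    rw [tfaces]
    rcases l with _ | ⟨⟨u, v⟩, l⟩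
    · simp [TValid, TSupp]
    · simp only [List.mem_singleton, reduceCtorEq, false_iff, not_and, tsupp_cons]
      intro _ h
      simpa using (h u)
  | [a], _, _ =>
    rw [tfaces]
    simp only [List.not_mem_nil, false_iff, not_and]
    rcases l with _ | ⟨⟨u, v⟩, l⟩
    · intro _ h
      simpa using h a
    · intro h h'
      rw [tsupp_cons] at h'
      have h1 := h' u
      have h2 := h' v
      have := (tvalid_cons h).1
      simp at h1 h2
      rw [h1, h2] at this
      exact lt_irrefl _ this
  | a :: b :: G, hn, hG =>
    simp only [List.length_cons] at hn
    have hG' := hG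
    simp only [List.pairwise_cons, List.mem_cons] at hG'
    obtain ⟨ha, hb, hGp⟩ := hG'
    have hab : a < b := ha b (by simp)
    have haG : (a :: G).Pairwise (· < ·) := by
      simp only [List.pairwise_cons]; exact ⟨fun x hx => ha x (by simp [hx]), hGp⟩
    have hbG : (b :: G).Pairwise (· < ·) := by
      simp only [List.pairwise_cons]; exact ⟨hb, hGp⟩
    have i1 := ih (n-1) (by omega) (a :: G) (by simp; omega) haG
    have i2 := ih (n-1) (by omega) (b :: G) (by simp; omega) hbG
    have i3 := ih (n-2) (by omega) G (by omega) hGp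
    rw [tfaces]
    simp only [List.mem_map, List.mem_append, i1, i2, i3]
    constructor
    · rintro ⟨l', h, rfl⟩
      rw [tsupp_cons]
      rcases h with ⟨hv, hs⟩ | ⟨hv, hs⟩ | ⟨hv, hs⟩
      · refine ⟨tvalid_cons_mk hab hv ?_, ?_⟩
        · intro q hq
          have q1 := hv.1 q hq
          have e1 := (hs q.1).2 ⟨q, hq, Or.inl rfl⟩
          have e2 := (hs q.2).2 ⟨q, hq, Or.inr rfl⟩
          simp only [List.mem_cons] at e1 e2
          grind
        · intro x
          have := hs x
          simp only [List.mem_cons] at this ⊢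
          rw [← this]; tauto
      · refine ⟨tvalid_cons_mk hab hv ?_, ?_⟩
        · intro q hq
          have q1 := hv.1 q hq
          have e1 := (hs q.1).2 ⟨q, hq, Or.inl rfl⟩
          have e2 := (hs q.2).2 ⟨q, hq, Or.inr rfl⟩
          simp only [List.mem_cons] at e1 e2
          grind
        · intro x
          have := hs x
          simp only [List.mem_cons] at this ⊢
          rw [← this]; tauto
      · refine ⟨tvalid_cons_mk hab hv ?_, ?_⟩
        · intro q hq
          have q1 := hv.1 q hq
          have e1 := (hs q.1).2 ⟨q, hq, Or.inl rfl⟩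
          have e2 := (hs q.2).2 ⟨q, hq, Or.inr rfl⟩
          grind
        · intro x
          have := hs x
          simp only [List.mem_cons] at this ⊢
          rw [← this]
    · rintro ⟨hv, hs⟩
      rcases l with _ | ⟨⟨u, v⟩, l⟩
      · simpa using (hs a)
      rw [tsupp_cons] at hs
      obtain ⟨huv, hvl, hq⟩ := tvalid_cons hv
      simp only [List.mem_cons] at hs
      have hge : ∀ x, (∃ p ∈ l, x = p.1 ∨ x = p.2) → x = u ∨ v ≤ x := by
        rintro x ⟨p, hp, rfl | rfl⟩
        · exact (hq p hp).2.imp Eq.symm id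
        · exact Or.inr (hq p hp).1.le
      have hu : u = a := by
        have h1 := (hs u).2 (Or.inl rfl)
        have h2 := (hs a).1 (Or.inl rfl)
        have h3 := hge a
        grind
      subst hu
      have hvb : v = b := by
        have h1 := (hs v).2 (Or.inr (Or.inl rfl))
        have h2 := (hs b).1 (Or.inr (Or.inl rfl))
        have h3 := hge b
        grind
      subst hvb
      refine ⟨l, ?_, rfl⟩
      have key : ¬ ((∃ p ∈ l, u = p.1 ∨ u = p.2) ∧ (∃ p ∈ l, v = p.1 ∨ v = p.2)) := by
        rintro ⟨⟨q, hql, h1⟩, ⟨r, hrl, h2⟩⟩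
        have hq1 : q.1 = u := by have := hq q hql; grind
        have hr1 : r.1 = v := by have := hq r hrl; grind
        have hq2 := (hq q hql).1
        have hr2 := (hq r hrl).1
        have hne : q ≠ r := by rintro rfl; rw [hq1] at hr1; exact huv.ne hr1
        have hp : l.Pairwise (fun p q : β × β => 
          (p.2 < q.2 ∧ (p.1 = q.1 ∨ p.2 ≤ q.1)) ∨ (q.2 < p.2 ∧ (q.1 = p.1 ∨ q.2 ≤ p.1)) ∨ p = q) :=
          hvl.2.imp (fun h => Or.inl h)
        have : Std.Symm (fun p q : β × β =>
          (p.2 < q.2 ∧ (p.1 = q.1 ∨ p.2 ≤ q.1)) ∨ (q.2 < p.2 ∧ (q.1 = p.1 ∨ q.2 ≤ p.1)) ∨ p = q) :=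
          ⟨fun a b h => by grind⟩
        have := hp.forall_of_forall (fun a _ => by simp) hql hrl
        grind
      by_cases hua : ∃ p ∈ l, u = p.1 ∨ u = p.2
      · left
        refine ⟨hvl, fun x => ?_⟩
        have := hs x
        simp only [List.mem_cons]
        grind
      · right
        by_cases hvb : ∃ p ∈ l, v = p.1 ∨ v = p.2
        · left
          refine ⟨hvl, fun x => ?_⟩
          have := hs x
          simp only [List.mem_cons]
          grind
        · right
          refine ⟨hvl, fun x => ?_⟩
          have := hs x
          grind

theorem nodup_tfaces (n : ℕ) : ∀ (G : List β), G.length = n → G.Pairwise (· < ·) →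
    (tfaces G).Nodup := by
  induction n using Nat.strong_induction_on with
  | _ n ih =>
  intro G hn hG
  match G, hn, hG with
  | [], _, _ => rw [tfaces]; simp
  | [a], _, _ => rw [tfaces]; simp
  | a :: b :: G, hn, hG =>
    simp only [List.length_cons] at hn
    have hG' := hG
    simp only [List.pairwise_cons, List.mem_cons] at hG'
    obtain ⟨ha, hb, hGp⟩ := hG'
    have hab : a < b := ha b (by simp)
    have haG : (a :: G).Pairwise (· < ·) := by
      simp only [List.pairwise_cons]; exact ⟨fun x hx => ha x (by simp [hx]), hGp⟩
    have hbG : (b :: G).Pairwise (· < ·) := by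
      simp only [List.pairwise_cons]; exact ⟨hb, hGp⟩
    have i1 := ih (n-1) (by omega) (a :: G) (by simp; omega) haG
    have i2 := ih (n-1) (by omega) (b :: G) (by simp; omega) hbG
    have i3 := ih (n-2) (by omega) G (by omega) hGp
    rw [tfaces]
    refine List.Nodup.map (fun x y h => by simpa using h) ?_
    have m1 := mem_tfaces _ (a :: G) rfl haG
    have m2 := mem_tfaces _ (b :: G) rfl hbG
    have m3 := mem_tfaces _ G rfl hGp
    have haG : a ∉ G := fun h => lt_irrefl _ (ha a (Or.inr h))
    have hbG : b ∉ G := fun h => lt_irrefl _ (hb b h)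
    refine i1.append (i2.append i3 ?_) ?_
    · intro l h1 h2
      have h1 := ((m2 l).1 h1).2 b
      have h2 := ((m3 l).1 h2).2 b
      rw [← h2] at h1
      simp [hbG] at h1
    · intro l h1 h2
      have h1 := ((m1 l).1 h1).2 a
      rcases List.mem_append.1 h2 with h2 | h2
      · have h2 := ((m2 l).1 h2).2 a
        rw [← h2] at h1
        simp [haG, hab.ne] at h1
      · have h2 := ((m3 l).1 h2).2 a
        rw [← h2] at h1
        simp [haG] at h1

noncomputable def rpoly : ℕ → ℕ[X]
  | 0 => 1
  | 1 => 0
  | n + 2 => X * (2 * rpoly (n + 1) + rpoly n)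

theorem rpoly_natDegree (n : ℕ) : (rpoly n).natDegree ≤ n ∧ (rpoly (n + 1)).natDegree ≤ n := by
  induction n with
  | zero => simp [rpoly]
  | succ n ih =>
    refine ⟨ih.2.trans (by omega), ?_⟩
    rw [rpoly]
    refine natDegree_mul_le.trans ?_
    have h2 : (2 * rpoly (n + 1)).natDegree ≤ n := by
      refine natDegree_mul_le.trans ?_
      have : (2 : ℕ[X]).natDegree = 0 := natDegree_ofNat 2
      omega
    have := natDegree_add_le_of_degree_le h2 ih.1
    have := natDegree_X_le (R := ℕ)
    omega

theorem count_tfaces (n : ℕ) : ∀ (G : List β), G.length = n → ∀ k,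
    (tfaces G).countP (fun l => l.length = k) = (rpoly n).coeff k := by
  induction n using Nat.strong_induction_on with
  | _ n ih =>
  intro G hn k
  match G, hn with
  | [], rfl =>
    rw [tfaces]; simp [rpoly, coeff_one, List.countP_cons, eq_comm]
  | [a], rfl => rw [tfaces]; simp [rpoly]
  | a :: b :: G, rfl =>
    have i1 := ih (G.length + 1) (by simp) (a :: G) (by simp)
    have i2 := ih (G.length + 1) (by simp) (b :: G) (by simp)
    have i3 := ih (G.length) (by simp) G rfl
    rw [tfaces, List.length_cons, List.length_cons, rpoly, List.countP_map]
    cases k with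
    | zero => simp [Function.comp_def]
    | succ k =>
      have : (2 : ℕ[X]) = C 2 := rfl
      rw [coeff_X_mul, this, coeff_add, coeff_C_mul]
      simp [Function.comp_def, i1, i2, i3]
      ring
end
section
variable {α : Type*} [LinearOrder α]

def tfacesOf {β : Type*} [LinearOrder β] (G : Finset β) (k : ℕ) : Finset (List (β × β)) :=
  (tfaces G.sort).toFinset.filter (fun l => l.length = k)

theorem mem_tfacesOf {β : Type*} [LinearOrder β] (G : Finset β) (k : ℕ) (l : List (β × β)) :
    l ∈ tfacesOf G k ↔ TValid l ∧ l.length = k ∧ ∀ x, x ∈ G ↔ ∃ p ∈ l, x = p.1 ∨ x = p.2 := by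
  have := mem_tfaces _ G.sort rfl (Finset.sortedLT_sort G).pairwise l
  simp only [tfacesOf, Finset.mem_filter, List.mem_toFinset, this, TSupp, Finset.mem_sort]
  tauto

theorem card_tfacesOf {β : Type*} [LinearOrder β] (G : Finset β) (k : ℕ) :
    (tfacesOf G k).card = (rpoly G.card).coeff k := by
  have h := nodup_tfaces _ G.sort rfl (Finset.sortedLT_sort G).pairwise
  rw [← count_tfaces G.card G.sort (by simp) k, List.countP_eq_length_filter,
    ← List.toFinset_card_of_nodup (h.filter _)]
  congr 1
  ext l
  simp [tfacesOf]

noncomputable def tB (F : Finset α) (k : ℕ) : Finset (List (WithTop α × WithTop α)) :=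
  tfacesOf (F.map ⟨WithTop.some, WithTop.coe_injective⟩) k ∪
    tfacesOf (insert ⊤ (F.map ⟨WithTop.some, WithTop.coe_injective⟩)) k

theorem mem_tB (F : Finset α) (k : ℕ) (l : List (WithTop α × WithTop α)) :
    l ∈ tB F k ↔ TValid l ∧ l.length = k ∧
      ∀ a : α, a ∈ F ↔ ∃ p ∈ l, (a : WithTop α) = p.1 ∨ (a : WithTop α) = p.2 := by
  simp only [tB, Finset.mem_union, mem_tfacesOf, ← and_or_left, WithTop.forall, Finset.mem_insert,
    true_or, true_iff, WithTop.coe_ne_top, false_or]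
  have h1 : (⊤ : WithTop α) ∉ F.map ⟨WithTop.some, WithTop.coe_injective⟩ := by simp
  have h2 : ∀ a : α, (a : WithTop α) ∈ F.map ⟨WithTop.some, WithTop.coe_injective⟩ ↔ a ∈ F := by
    simp
  simp only [h1, h2, false_iff, ← or_and_right, (Classical.em _).symm, true_and]

theorem card_tB (F : Finset α) (k : ℕ) :
    (tB F k).card = (rpoly F.card + rpoly (F.card + 1)).coeff k := by
  have h1 : (⊤ : WithTop α) ∉ F.map ⟨WithTop.some, WithTop.coe_injective⟩ := by simp
  rw [tB, Finset.card_union_of_disjoint, card_tfacesOf, card_tfacesOf,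
    Finset.card_insert_of_notMem h1, Finset.card_map, coeff_add]
  rw [Finset.disjoint_left]
  intro l hl hl'
  rw [mem_tfacesOf] at hl hl'
  have := (hl.2.2 ⊤).trans (hl'.2.2 ⊤).symm
  simp at this

theorem tvalid_ext {β : Type*} [LinearOrder β] {l l' : List (β × β)} (h : TValid l)
    (h' : TValid l') (he : ∀ x, x ∈ l ↔ x ∈ l') : l = l' := by
  have : Std.Irrefl (fun p q : β × β => p.2 < q.2) := ⟨fun a => lt_irrefl _⟩
  have : Std.Antisymm (fun p q : β × β => p.2 < q.2) :=
    ⟨fun a b h1 h2 => absurd (h1.trans h2) (lt_irrefl _)⟩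
  exact List.Subset.antisymm_of_pairwise (r := fun p q : β × β => p.2 < q.2)
    (h.2.imp (fun h => h.1)) (h'.2.imp (fun h => h.1))
    (fun x hx => (he x).1 hx) (fun x hx => (he x).2 hx)

theorem mem_pairVertexSet [DecidableEq α] (p : α × WithTop α) (a : α) :
    a ∈ pairVertexSet p ↔ (a : WithTop α) = (p.1 : WithTop α) ∨ (a : WithTop α) = p.2 := by
  obtain ⟨u, v⟩ := p
  unfold pairVertexSet
  induction v using WithTop.recTopCoe <;> simp

theorem ncard_tchebFaces [d : DecidableEq α] (A : Finset (Finset α)) (k : ℕ) :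
    (tchebFaces A k).ncard = ∑ F ∈ A, (rpoly F.card + rpoly (F.card + 1)).coeff k := by
  classical
  have hdis : ((A : Set (Finset α))).PairwiseDisjoint (fun F => tB F k) := by
    intro F _ F' _ hne
    simp only [Function.onFun, Finset.disjoint_left]
    intro l h h'
    rw [mem_tB] at h h'
    exact hne (Finset.ext fun a => (h.2.2 a).trans (h'.2.2 a).symm)
  have hcard := Finset.card_biUnion hdis
  simp only [card_tB] at hcard
  rw [← hcard, ← Set.ncard_coe_finset]
  set c : α × WithTop α → WithTop α × WithTop α := fun p => ((p.1 : WithTop α), p.2) with hc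
  have hcinj : Function.Injective c := by
    rintro ⟨u, v⟩ ⟨u', v'⟩ h
    simpa [hc] using h
  have hinj1 : Function.Injective (fun σ : Finset (α × WithTop α) => c '' (σ : Set _)) :=
    hcinj.image_injective.comp Finset.coe_injective
  have hinj2 : Set.InjOn (fun l : List (WithTop α × WithTop α) => {x | x ∈ l})
      (A.biUnion fun F => tB F k : Finset _) := by
    intro l hl l' hl' h
    simp only [Finset.coe_biUnion, Set.mem_iUnion, Finset.mem_coe, mem_tB] at hl hl'
    obtain ⟨_, _, h1, _⟩ := hl
    obtain ⟨_, _, h2, _⟩ := hl'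
    exact tvalid_ext h1 h2 (fun x => by simpa using Set.ext_iff.1 h x)
  rw [← Set.ncard_image_of_injective _ hinj1, ← Set.ncard_image_of_injOn hinj2]
  congr 1
  ext s
  simp only [Set.mem_image, Finset.coe_biUnion, Set.mem_iUnion, Finset.mem_coe, mem_tB]
  constructor
  · rintro ⟨σ, ⟨e, rfl, hmono, hlt, hmem, hadj⟩, rfl⟩
    refine ⟨List.ofFn (fun i => c (e i)), ⟨_, hmem, ⟨?_, ?_⟩, by simp, ?_⟩, ?_⟩
    · simp only [List.mem_ofFn]
      rintro p ⟨i, rfl⟩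
      exact hlt i
    · rw [List.pairwise_ofFn]
      have key : ∀ d : ℕ, ∀ i j : Fin k, (i : ℕ) + 1 + d = (j : ℕ) →
          (e i).1 = (e j).1 ∨ (e i).2 ≤ ((e j).1 : WithTop α) := by
        intro d
        induction d with
        | zero => intro i j h; exact hadj i j (by omega)
        | succ d ih =>
          intro i j h
          have hj := j.2
          let m : Fin k := ⟨i + 1 + d, by omega⟩
          have h1 := ih i m rfl
          have h2 := hadj m j (by simp only [m]; omega)
          have him : (e i).2 < (e m).2 := hmono (by rw [Fin.lt_def]; simp only [m]; omega)
          have hm := hlt m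
          rcases h2 with h2 | h2
          · rw [← h2]; exact h1
          · right; exact him.le.trans h2
      intro i j hij
      refine ⟨hmono hij, ?_⟩
      have := key ((j : ℕ) - i - 1) i j (by rw [Fin.lt_def] at hij; omega)
      simpa [hc] using this
    · intro a
      simp [mem_pairVertexSet, List.mem_ofFn, hc]
    · ext x
      simp [List.mem_ofFn]
  · rintro ⟨l, ⟨F, hF, hv, rfl, hs⟩, rfl⟩
    have hne : ∀ i : Fin l.length, (l.get i).1 ≠ ⊤ := fun i =>
      ne_top_of_lt (hv.1 _ (List.get_mem l i))
    set e : Fin l.length → α × WithTop α := fun i => ((l.get i).1.untop (hne i), (l.get i).2) with he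
    have hce : ∀ i, c (e i) = l.get i := by
      intro i; simp [hc, he]
    have hce1 : ∀ i, ((e i).1 : WithTop α) = (l.get i).1 := fun i => by rw [← hce i]
    have hce2 : ∀ i, (e i).2 = (l.get i).2 := fun i => rfl
    have hpw := List.pairwise_iff_get.1 hv.2
    refine ⟨Finset.image e Finset.univ, ⟨e, ?_, ?_, ?_, ?_, ?_⟩, ?_⟩
    · congr
    · intro i j hij
      exact (hpw i j hij).1
    · intro i
      rw [hce1, hce2]
      exact hv.1 _ (List.get_mem l i)
    · convert hF using 1
      ext a
      rw [hs a]
      simp only [Finset.mem_biUnion, mem_pairVertexSet, hce1, hce2, Finset.mem_univ, true_and]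
      constructor
      · rintro ⟨i, h⟩; exact ⟨_, List.get_mem l i, h⟩
      · rintro ⟨p, hp, h⟩
        obtain ⟨i, rfl⟩ := List.mem_iff_get.1 hp
        exact ⟨i, h⟩
    · intro i j hij
      have := (hpw i j (by rw [Fin.lt_def]; omega)).2
      rw [← hce1 i, ← hce1 j, ← hce2 i, WithTop.coe_inj] at this
      exact this
    · ext x
      simp only [Finset.coe_image, Finset.coe_univ, Set.image_univ, Set.mem_image, Set.mem_range,
        exists_exists_eq_and, hce, Set.mem_setOf_eq]
      exact List.mem_iff_get.symm
end

noncomputable def chebLin : ℚ[X] →ₗ[ℚ] ℚ[X] :=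
  Polynomial.lsum (fun n => LinearMap.toSpanSingleton ℚ ℚ[X] (Polynomial.Chebyshev.T ℚ (n : ℤ)))

theorem chebLin_X_pow (n : ℕ) : chebLin (X ^ n) = Polynomial.Chebyshev.T ℚ (n : ℤ) := by
  simp [chebLin, ← monomial_one_right_eq_X_pow, Polynomial.lsum_apply]

theorem chebTransform_eq (p : ℚ[X]) : chebTransform p = chebLin p := by
  conv_rhs => rw [p.as_sum_range_C_mul_X_pow]
  simp only [chebTransform, map_sum, ← Polynomial.smul_eq_C_mul, map_smul, chebLin_X_pow]

theorem chebLin_rec (q : ℚ[X]) :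
    chebLin (X ^ 2 * q) = 2 * X * chebLin (X * q) - chebLin q := by
  induction q using Polynomial.induction_on' with
  | add p q hp hq => simp only [mul_add, map_add, hp, hq]; ring
  | monomial n a =>
    rw [← C_mul_X_pow_eq_monomial]
    have h1 : X ^ 2 * (C a * X ^ n) = a • (X ^ (n + 2) : ℚ[X]) := by
      rw [smul_eq_C_mul]; ring
    have h2 : X * (C a * X ^ n) = a • (X ^ (n + 1) : ℚ[X]) := by
      rw [smul_eq_C_mul]; ring
    rw [h1, h2, ← smul_eq_C_mul, map_smul, map_smul, map_smul, chebLin_X_pow, chebLin_X_pow,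
      chebLin_X_pow]
    have := Polynomial.Chebyshev.T_add_two ℚ (n : ℤ)
    push_cast
    rw [this]
    simp only [smul_eq_C_mul]
    ring

theorem chebLin_t_pow (n : ℕ) :
    chebLin (((X - 1) * C (1 / 2 : ℚ)) ^ n) =
      aeval ((X - 1) * C (1 / 2 : ℚ)) (rpoly n + rpoly (n + 1)) := by
  set t : ℚ[X] := (X - 1) * C (1 / 2 : ℚ) with ht
  have hC : (2 : ℚ[X]) * C (1 / 2 : ℚ) = 1 := by
    have : (2 : ℚ[X]) = C 2 := rfl
    rw [this, ← C_mul]; norm_num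
  have hX : (X : ℚ[X]) = 2 * t + 1 := by rw [ht]; linear_combination (1 - X) * hC
  have h2 : ∀ q : ℚ[X], chebLin (2 * q) = 2 * chebLin q := fun q => by
    rw [two_mul, map_add, two_mul]
  have h0 : chebLin 1 = 1 := by
    have := chebLin_X_pow 0
    simpa using this
  have h1 : chebLin t = t := by
    have h := chebLin_X_pow 1
    rw [pow_one] at h
    have h' : chebLin X = 2 * chebLin t + 1 := by
      conv_lhs => rw [hX]
      rw [map_add, h2, h0]
    simp only [Nat.cast_one, Polynomial.Chebyshev.T_one] at h
    rw [h] at h'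
    have : (2 : ℚ[X]) * chebLin t = 2 * t := by linear_combination -h' + hX
    exact mul_left_cancel₀ two_ne_zero this
  have hrec : ∀ q, chebLin (t ^ 2 * q) = 2 * t * chebLin (t * q) + t * chebLin q := by
    intro q
    have h := chebLin_rec q
    have e1 : X * q = 2 * (t * q) + q := by rw [hX]; ring
    have e2 : X ^ 2 * q = 2 * (2 * (t ^ 2 * q)) + 2 * (2 * (t * q)) + q := by rw [hX]; ring
    rw [e1, e2] at h
    simp only [map_add, h2] at h
    rw [hX] at h
    have : (2 : ℚ[X]) * (2 * chebLin (t ^ 2 * q)) =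
      2 * (2 * (2 * t * chebLin (t * q) + t * chebLin q)) := by linear_combination h
    exact mul_left_cancel₀ two_ne_zero (mul_left_cancel₀ two_ne_zero this)
  suffices H : chebLin (t ^ n) = aeval t (rpoly n + rpoly (n + 1)) ∧
      chebLin (t ^ (n + 1)) = aeval t (rpoly (n + 1) + rpoly (n + 2)) from H.1
  induction n with
  | zero => simp [rpoly, h0, h1]
  | succ n ih =>
    refine ⟨ih.2, ?_⟩
    have h := hrec (t ^ n)
    have e : t * t ^ n = t ^ (n + 1) := by ring
    rw [e, ih.1, ih.2] at h
    have e' : t ^ (n + 1 + 1) = t ^ 2 * t ^ n := by ring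
    rw [e', h]
    have r1 : rpoly (n + 1 + 2) = X * (2 * rpoly (n + 2) + rpoly (n + 1)) := rfl
    have r2 : rpoly (n + 2) = X * (2 * rpoly (n + 1) + rpoly n) := rfl
    rw [r1]
    simp only [map_add, map_mul, aeval_X, map_ofNat]
    have r2' : aeval t (rpoly (n + 2)) = t * (2 * aeval t (rpoly (n + 1)) + aeval t (rpoly n)) := by
      rw [r2]; simp only [map_add, map_mul, aeval_X, map_ofNat]
    linear_combination (-1 : ℚ[X]) * r2'

theorem rpoly_coeff_zero (n : ℕ) : (rpoly (n + 1)).coeff 0 = 0 := by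
  cases n <;> simp [rpoly]

theorem aeval_rpoly (n N : ℕ) (hn : 1 ≤ n) (hN : n ≤ N) (t : ℚ[X]) :
    aeval t (rpoly n + rpoly (n + 1)) = ∑ k ∈ Finset.Icc 1 N,
      C (((rpoly n + rpoly (n + 1)).coeff k : ℕ) : ℚ) * t ^ k := by
  have hd : (rpoly n + rpoly (n + 1)).natDegree < N + 1 := by
    have := natDegree_add_le_of_degree_le (rpoly_natDegree n).1 (rpoly_natDegree n).2
    omega
  rw [aeval_eq_sum_range' hd, Finset.sum_range_eq_add_Ico _ (by omega)]
  obtain ⟨m, rfl⟩ : ∃ m, n = m + 1 := ⟨n - 1, by omega⟩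
  rw [coeff_add, rpoly_coeff_zero, rpoly_coeff_zero]
  have : Finset.Ico 1 (N + 1) = Finset.Icc 1 N := by ext; simp
  rw [this]
  simp

/-- **Hetyei's compatibility, generalized to cell complexes**: the Tchebyshev transform of
the F-polynomial of `A` is the F-polynomial of its Tchebyshev triangulation:
`T(F_A)(x) = F_{T(A)}(x)` in `ℚ[x]`, where `F_A(x) = 1 + ∑_{j≥1} s_j(A)·((x-1)/2)^j` and
`F_{T(A)}(x) = 1 + ∑_{k≥1} f_{k-1}(T(A))·((x-1)/2)^k`. -/
theorem chebTransform_F_polynomial {α : Type*} [LinearOrder α] [Fintype α] [DecidableEq α]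
    (A : Finset (Finset α)) (hA : ∀ F ∈ A, F ≠ ∅) :
    chebTransform
        (1 + ∑ j ∈ Finset.Icc 1 (Fintype.card α),
          C ((sCount A j : ℚ)) * ((X - 1) * C (1 / 2 : ℚ)) ^ j)
      = 1 + ∑ k ∈ Finset.Icc 1 (Fintype.card α),
          C (((tchebFaces A k).ncard : ℚ)) * ((X - 1) * C (1 / 2 : ℚ)) ^ k := by
  have hcard : ∀ F ∈ A, F.card ∈ Finset.Icc 1 (Fintype.card α) := fun F hF =>
    Finset.mem_Icc.2 ⟨Finset.card_pos.2 (Finset.nonempty_iff_ne_empty.2 (hA F hF)),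
      Finset.card_le_univ F⟩
  have h0 : chebLin 1 = 1 := by
    have := chebLin_X_pow 0
    simpa using this
  rw [chebTransform_eq, map_add, h0]
  congr 1
  have hL : (∑ j ∈ Finset.Icc 1 (Fintype.card α),
      C ((sCount A j : ℚ)) * ((X - 1) * C (1 / 2 : ℚ)) ^ j) =
      ∑ F ∈ A, ((X - 1) * C (1 / 2 : ℚ)) ^ F.card := by
    rw [← Finset.sum_fiberwise_of_maps_to hcard]
    refine Finset.sum_congr rfl fun j _ => ?_
    rw [Finset.sum_congr rfl (g := fun _ => ((X - 1) * C (1 / 2 : ℚ)) ^ j)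
      (fun F hF => by rw [(Finset.mem_filter.1 hF).2])]
    rw [Finset.sum_const, sCount, nsmul_eq_mul, map_natCast]
  rw [hL, map_sum]
  rw [Finset.sum_congr rfl (fun F hF => by
    rw [chebLin_t_pow, aeval_rpoly F.card (Fintype.card α) (Finset.mem_Icc.1 (hcard F hF)).1
      (Finset.mem_Icc.1 (hcard F hF)).2])]
  rw [Finset.sum_comm]
  refine Finset.sum_congr rfl fun k _ => ?_
  rw [ncard_tchebFaces, Nat.cast_sum, map_sum, Finset.sum_mul]
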